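/- For any Artin generator σ_k of B_n and any nonzero integer c, the centralizer of σ_k in B_n is equal to the centralizer of σ_k^c in B_n. -/

import Mathlib

/-- The Artin braid relations on `m` generators (for the braid group `B_{m+1}`):
commutation `σ_i σ_j = σ_j σ_i` for `|i - j| > 1`, and the braid relation
`σ_i σ_j σ_i = σ_j σ_i σ_j` for `j = i + 1`, written as relators. -/
def braidRels (m : ℕ) : Set (FreeGroup (Fin m)) :=
  { r | (∃ i j : Fin m, (i : ℕ) + 1 < (j : ℕ) ∧
          r = FreeGroup.of i * FreeGroup.of j * (FreeGroup.of i)⁻¹ * (FreeGroup.of j)⁻¹) ∨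
        (∃ i j : Fin m, (i : ℕ) + 1 = (j : ℕ) ∧
          r = FreeGroup.of i * FreeGroup.of j * FreeGroup.of i *
              (FreeGroup.of j * FreeGroup.of i * FreeGroup.of j)⁻¹) }

/-- The braid group `B_n`, presented on the `n - 1` Artin generators. -/
abbrev BraidGroup (n : ℕ) : Type := PresentedGroup (braidRels (n - 1))

/-- The Artin generator `σ_i` of the braid group `B_n`. -/
def σ {n : ℕ} (i : Fin (n - 1)) : BraidGroup n := PresentedGroup.of i

/-!
Everything happens in the monoid of positive braids, where it is an instance of a fact about the
Artin monoid of an arbitrary graph. Garside's lemma says that a common multiple of two generators is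
a multiple of their least common multiple; it implies left cancellation. Let `a` be positive with
`a * σ i ^ c = σ j ^ c * a` and `c > 0`, and let `σ k` be a first letter of `a`. Garside's lemma
forces `a = u * t` where `u` is `σ k` or `σ k * σ j`, and in each case `u` conjugates a generator
`σ l` to `σ j`; cancelling `u` leaves the same equation for the shorter element `t`, with `l` in
place of `j`. When `a = 1` the equation says `σ i ^ c = σ j ^ c`, which forces `i = j`. Thus `a`
conjugates `σ i` to `σ j`. The full twist is a central positive braid divisible by every generator,
so the monoid embeds in its group of fractions, hence in the braid group, and every braid is a
positive one divided by a power of the full twist; this carries the result over to the group.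
-/

/-! ### Central denominators -/

section CentralDenominator

universe u

variable {M : Type u} [Monoid M]

/-- A *central denominator* of a monoid is a central element some power of which is a right multiple
of any given element. In a left cancellative monoid it allows every fraction to be written with a
power of `z` as its denominator. -/
structure IsCentralDenominator (z : M) : Prop where
  commute (a : M) : Commute z a
  dvd_pow (a : M) : ∃ n : ℕ, a ∣ z ^ n

namespace IsCentralDenominator

variable {z : M}

theorem of_closure_eq_top {S : Set M} (hS : Submonoid.closure S = ⊤)
    (hcomm : ∀ a ∈ S, Commute z a) (hdvd : ∀ a ∈ S, a ∣ z) : IsCentralDenominator z := by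
  have hz (a : M) : Commute z a := by
    induction a using Submonoid.induction_of_closure_eq_top_left hS with
    | one => exact Commute.one_right z
    | mul_left a ha b hb => exact (hcomm a ha).mul_right hb
  refine ⟨hz, fun a => ?_⟩
  induction a using Submonoid.induction_of_closure_eq_top_left hS with
  | one => exact ⟨0, one_dvd _⟩
  | mul_left a ha b hb =>
    obtain ⟨n, r, hr⟩ := hb
    obtain ⟨q, hq⟩ := hdvd a ha
    refine ⟨n + 1, r * q, ?_⟩
    calc z ^ (n + 1) = z ^ n * a * q := by rw [pow_succ, mul_assoc, ← hq]
      _ = a * z ^ n * q := by rw [((hz a).pow_left n).eq]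
      _ = a * b * (r * q) := by rw [hr]; simp only [mul_assoc]

/-- The powers of a central element form a left Ore set. -/
abbrev oreSetPowers (hz : IsCentralDenominator z) :
    OreLocalization.OreSet (Submonoid.powers z) where
  ore_right_cancel a b s h := by
    obtain ⟨_, n, rfl⟩ := s
    refine ⟨⟨z ^ n, n, rfl⟩, ?_⟩
    change z ^ n * a = z ^ n * b
    rw [((hz.commute a).pow_left n).eq, ((hz.commute b).pow_left n).eq]
    exact h
  oreNum a _ := a
  oreDenom _ s := s
  ore_eq a s := by
    obtain ⟨_, n, rfl⟩ := s
    exact ((hz.commute a).pow_left n).eq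

theorem exists_injective_hom_group [IsLeftCancelMul M] (hz : IsCentralDenominator z) :
    ∃ (H : Type u) (_ : Group H) (f : M →* H), Function.Injective f := by
  let := hz.oreSetPowers
  let f : M →* OreLocalization (Submonoid.powers z) M := OreLocalization.numeratorHom
  have hf_inj : Function.Injective f := by
    intro a b h
    obtain ⟨u, v, huv, h_eq⟩ := OreLocalization.oreDiv_eq_iff.1 h
    have : (u : M) = v := by simpa using h_eq
    rw [← this] at huv
    exact (mul_left_cancel huv).symm
  have hf_unit (a : M) : IsUnit (f a) := by
    obtain ⟨n, r, hr⟩ := hz.dvd_pow a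
    have hra : r * a = a * r := by
      refine mul_left_cancel (a := a) ?_
      rw [← mul_assoc, ← hr, ((hz.commute a).pow_left n).eq]
    have hu : IsUnit (f (z ^ n)) :=
      OreLocalization.numerator_isUnit (⟨z ^ n, n, rfl⟩ : Submonoid.powers z)
    have hcomm : Commute (f a) (f r) := (show Commute a r from hra.symm).map f
    rw [hr, map_mul] at hu
    exact (hcomm.isUnit_mul_iff.1 hu).1
  refine ⟨_, inferInstance, IsUnit.liftRight f hf_unit, fun a b h => hf_inj ?_⟩
  simpa only [IsUnit.coe_liftRight] using congrArg Units.val h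

variable {G : Type*} [Group G] {φ : M →* G}

theorem commute_map (hz : IsCentralDenominator z) (hφ : Subgroup.closure (Set.range φ) = ⊤)
    (g : G) : Commute (φ z) g := by
  have hg : g ∈ Subgroup.closure (Set.range φ) := hφ ▸ Subgroup.mem_top g
  induction hg using Subgroup.closure_induction with
  | mem g hg =>
    obtain ⟨a, rfl⟩ := hg
    exact (hz.commute a).map φ
  | one => exact Commute.one_right _
  | mul g h _ _ hg hh => exact hg.mul_right hh
  | inv g _ hg => exact hg.inv_right

theorem exists_mul_pow_eq_map (hz : IsCentralDenominator z)
    (hφ : Subgroup.closure (Set.range φ) = ⊤) (g : G) :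
    ∃ (a : M) (n : ℕ), g * φ z ^ n = φ a := by
  have hg : g ∈ Subgroup.closure (Set.range φ) := hφ ▸ Subgroup.mem_top g
  have hcomm (n : ℕ) (g : G) : Commute (φ z ^ n) g := (hz.commute_map hφ g).pow_left n
  induction hg using Subgroup.closure_induction with
  | mem g hg =>
    obtain ⟨a, rfl⟩ := hg
    exact ⟨a, 0, by simp⟩
  | one => exact ⟨1, 0, by simp⟩
  | mul g h _ _ hg hh =>
    obtain ⟨a, n, ha⟩ := hg
    obtain ⟨b, k, hb⟩ := hh
    refine ⟨a * b, n + k, ?_⟩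
    rw [map_mul, ← ha, ← hb, pow_add]
    exact Commute.mul_mul_mul_comm (hcomm n h).symm g _
  | inv g _ hg =>
    obtain ⟨a, n, ha⟩ := hg
    obtain ⟨k, r, hr⟩ := hz.dvd_pow a
    refine ⟨z ^ n * r, k, ?_⟩
    rw [map_mul, inv_mul_eq_iff_eq_mul, ← mul_assoc, map_pow, ha, ← map_mul, ← hr, map_pow]

theorem semiconjBy_of_semiconjBy_map (hz : IsCentralDenominator z)
    (hφ : Subgroup.closure (Set.range φ) = ⊤) (hinj : Function.Injective φ) {x y x' y' : M}
    (hM : ∀ a : M, SemiconjBy a x y → SemiconjBy a x' y') {g : G}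
    (hg : SemiconjBy g (φ x) (φ y)) : SemiconjBy g (φ x') (φ y') := by
  obtain ⟨a, n, ha⟩ := hz.exists_mul_pow_eq_map hφ g
  have hcomm (b : M) : Commute (φ z ^ n) (φ b) := (hz.commute_map hφ _).pow_left n
  have ha' : SemiconjBy (φ a) (φ x) (φ y) := ha ▸ hg.mul_left (hcomm x)
  have hφa : SemiconjBy (φ a) (φ x') (φ y') := (hM a (ha'.of_map hinj)).map φ
  rw [eq_mul_inv_of_mul_eq ha]
  exact hφa.mul_left (hcomm x').inv_left

end IsCentralDenominator

end CentralDenominator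

/-! ### The Artin monoid of a graph -/

section ArtinMonoid

variable {ι : Type*}

/-- The defining relations of the Artin monoid of the simple graph `Γ`: generators joined by an edge
satisfy the braid relation, and distinct generators not joined by an edge commute. -/
inductive ArtinRel (Γ : SimpleGraph ι) : FreeMonoid ι → FreeMonoid ι → Prop
  | comm {i j : ι} (h : Γᶜ.Adj i j) : ArtinRel Γ (.of i * .of j) (.of j * .of i)
  | braid {i j : ι} (h : Γ.Adj i j) :
      ArtinRel Γ (.of i * .of j * .of i) (.of j * .of i * .of j)

/-- The Artin monoid of the simply laced Coxeter diagram `Γ`. For the path graph on `n - 1` vertices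
this is the monoid of positive braids on `n` strands. -/
abbrev ArtinMonoid (Γ : SimpleGraph ι) : Type _ := PresentedMonoid (ArtinRel Γ)

namespace ArtinMonoid

variable {Γ : SimpleGraph ι} {i j k : ι}

/-- The generator of the Artin monoid attached to the vertex `i`. -/
def gen (i : ι) : ArtinMonoid Γ := PresentedMonoid.of (ArtinRel Γ) i

theorem closure_range_gen : Submonoid.closure (Set.range (gen (Γ := Γ))) = ⊤ :=
  PresentedMonoid.closure_range_of _

theorem eq_one_or_exists_gen_mul (a : ArtinMonoid Γ) : a = 1 ∨ ∃ i b, a = gen i * b := by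
  induction a using Submonoid.induction_of_closure_eq_top_left closure_range_gen with
  | one => exact .inl rfl
  | mul_left _ h b _ =>
    obtain ⟨i, rfl⟩ := h
    exact .inr ⟨i, b, rfl⟩

theorem gen_commute (h : Γᶜ.Adj i j) : Commute (gen i : ArtinMonoid Γ) (gen j) :=
  PresentedMonoid.mk_eq_mk_of_rel (.comm h)

theorem gen_braid (h : Γ.Adj i j) :
    gen i * gen j * gen i = (gen j * gen i * gen j : ArtinMonoid Γ) :=
  PresentedMonoid.mk_eq_mk_of_rel (.braid h)

theorem gen_mul_gen_mul_of_compl_adj (h : Γᶜ.Adj i j) (x : ArtinMonoid Γ) :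
    gen i * (gen j * x) = gen j * (gen i * x) :=
  (gen_commute h).left_comm x

theorem gen_mul_gen_mul_gen_mul_of_adj (h : Γ.Adj i j) (x : ArtinMonoid Γ) :
    gen i * (gen j * (gen i * x)) = gen j * (gen i * (gen j * x)) := by
  simpa only [mul_assoc] using congrArg (· * x) (gen_braid h)

theorem semiconjBy_gen_mul_gen (h : Γ.Adj i j) :
    SemiconjBy (gen i * gen j : ArtinMonoid Γ) (gen i) (gen j) := by
  rw [SemiconjBy, gen_braid h, mul_assoc]

/-- The word length of a positive element, well defined because the relations are homogeneous. -/
def length (x : ArtinMonoid Γ) : ℕ :=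
  (PresentedMonoid.lift (fun _ : ι => Multiplicative.ofAdd 1)
    (fun _ _ h => by cases h <;> simp) x).toAdd

@[simp]
theorem length_one : length (1 : ArtinMonoid Γ) = 0 := rfl

@[simp]
theorem length_mul (x y : ArtinMonoid Γ) : length (x * y) = length x + length y := by
  simp [length]

@[simp]
theorem length_gen (i : ι) : length (gen i : ArtinMonoid Γ) = 1 := rfl

theorem length_gen_mul (i : ι) (x : ArtinMonoid Γ) : length (gen i * x) = length x + 1 := by
  rw [length_mul, length_gen, add_comm]

/- The monoid acts on pairs `(x, b)` by `gen i • (x, b) = (gen i * x, f i x)`: the relations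
hold for this action precisely because `f` respects them. -/
theorem apply_eq_of_gen_mul_eq {β : Type*} (f : ι → ArtinMonoid Γ → β)
    (hcomm : ∀ {i j}, Γᶜ.Adj i j → ∀ x, f i (gen j * x) = f j (gen i * x))
    (hbraid : ∀ {i j}, Γ.Adj i j → ∀ x,
      f i (gen j * (gen i * x)) = f j (gen i * (gen j * x)))
    {x y : ArtinMonoid Γ} (h : gen i * x = gen j * y) : f i x = f j y := by
  let act (i : ι) : Function.End (ArtinMonoid Γ × β) := fun p => (gen i * p.1, f i p.1)
  have act_rel (u v : FreeMonoid ι) (h : ArtinRel Γ u v) :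
      FreeMonoid.lift act u = FreeMonoid.lift act v := by
    cases h with
    | comm h =>
      funext p
      exact Prod.ext (gen_mul_gen_mul_of_compl_adj h p.1) (hcomm h p.1)
    | braid h =>
      funext p
      exact Prod.ext (gen_mul_gen_mul_gen_mul_of_adj h p.1) (hbraid h p.1)
  let F := PresentedMonoid.lift act act_rel
  have F_fst (w : ArtinMonoid Γ) (p : ArtinMonoid Γ × β) : (F w p).1 = w * p.1 := by
    induction w using Submonoid.induction_of_closure_eq_top_left closure_range_gen with
    | one => rw [map_one, one_mul]; rfl
    | mul_left _ hi w hw =>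
      obtain ⟨i, rfl⟩ := hi
      rw [map_mul, mul_assoc, ← hw]
      rfl
  have F_snd (i : ι) (x : ArtinMonoid Γ) (b : β) : (F (gen i * x) (1, b)).2 = f i x := by
    rw [map_mul]
    change f i (F x (1, b)).1 = f i x
    rw [F_fst, mul_one]
  rw [← F_snd i x (f i x), h, F_snd]

open Classical in
/-- The right complement `gen i \ gen j`: the element for which `gen i * complement i j` is the
least common right multiple of `gen i` and `gen j`. -/
noncomputable def complement (i j : ι) : ArtinMonoid Γ :=
  if i = j then 1 else if Γ.Adj i j then gen j * gen i else gen j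

@[simp]
theorem complement_self (i : ι) : (complement i i : ArtinMonoid Γ) = 1 := by simp [complement]

theorem complement_of_adj (h : Γ.Adj i j) :
    (complement i j : ArtinMonoid Γ) = gen j * gen i := by
  simp [complement, h, h.ne]

theorem complement_of_compl_adj (h : Γᶜ.Adj i j) : (complement i j : ArtinMonoid Γ) = gen j := by
  rw [SimpleGraph.compl_adj] at h
  simp [complement, h]

theorem eq_or_adj_or_compl_adj (Γ : SimpleGraph ι) (i j : ι) :
    i = j ∨ Γ.Adj i j ∨ Γᶜ.Adj i j := by
  rw [SimpleGraph.compl_adj]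
  tauto

theorem gen_mul_complement (i j : ι) :
    gen i * complement i j = (gen j * complement j i : ArtinMonoid Γ) := by
  rcases eq_or_adj_or_compl_adj Γ i j with rfl | h | h
  · rfl
  · rw [complement_of_adj h, complement_of_adj h.symm, ← mul_assoc, gen_braid h, mul_assoc]
  · rw [complement_of_compl_adj h, complement_of_compl_adj h.symm, (gen_commute h).eq]

/-- The common multiple `gen i * x = gen j * y` is a multiple of the least common multiple of
`gen i` and `gen j`. -/
def FactorsThroughLcm (i : ι) (x : ArtinMonoid Γ) (j : ι) (y : ArtinMonoid Γ) : Prop :=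
  ∃ z, x = complement i j * z ∧ y = complement j i * z

namespace FactorsThroughLcm

variable {x y z : ArtinMonoid Γ}

theorem refl (i : ι) (x : ArtinMonoid Γ) : FactorsThroughLcm i x i x :=
  ⟨x, by simp, by simp⟩

theorem symm (h : FactorsThroughLcm i x j y) : FactorsThroughLcm j y i x :=
  let ⟨z, hx, hy⟩ := h
  ⟨z, hy, hx⟩

theorem of_compl_adj (h : Γᶜ.Adj i j) (z : ArtinMonoid Γ) :
    FactorsThroughLcm i (gen j * z) j (gen i * z) :=
  ⟨z, by rw [complement_of_compl_adj h], by rw [complement_of_compl_adj h.symm]⟩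

theorem of_adj (h : Γ.Adj i j) (z : ArtinMonoid Γ) :
    FactorsThroughLcm i (gen j * (gen i * z)) j (gen i * (gen j * z)) :=
  ⟨z, by rw [complement_of_adj h, mul_assoc], by rw [complement_of_adj h.symm, mul_assoc]⟩

theorem gen_mul_eq (h : FactorsThroughLcm i x j y) : gen i * x = gen j * y := by
  obtain ⟨z, rfl, rfl⟩ := h
  rw [← mul_assoc, gen_mul_complement, mul_assoc]

theorem eq (h : FactorsThroughLcm i x i y) : x = y := by
  obtain ⟨z, rfl, rfl⟩ := h
  rfl

theorem exists_of_compl_adj (h : FactorsThroughLcm i x j y) (hij : Γᶜ.Adj i j) :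
    ∃ z, x = gen j * z ∧ y = gen i * z := by
  rwa [FactorsThroughLcm, complement_of_compl_adj hij, complement_of_compl_adj hij.symm] at h

theorem exists_of_adj (h : FactorsThroughLcm i x j y) (hij : Γ.Adj i j) :
    ∃ z, x = gen j * (gen i * z) ∧ y = gen i * (gen j * z) := by
  simpa only [FactorsThroughLcm, complement_of_adj hij, complement_of_adj hij.symm, mul_assoc]
    using h

end FactorsThroughLcm

/-! ### Garside's lemma -/

section Garside

/-- Garside's lemma for common multiples of length at most `L`, the induction hypothesis in its
proof. The bound is stated for the cofactor of `gen i`, whose length is one less. -/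
def GarsideUpTo (Γ : SimpleGraph ι) (L : ℕ) : Prop :=
  ∀ ⦃i j : ι⦄ ⦃x y : ArtinMonoid Γ⦄, length x < L → gen i * x = gen j * y →
    FactorsThroughLcm i x j y

variable {L : ℕ} {w z z' x y : ArtinMonoid Γ}

/- Equating two factorizations through least common multiples produces the same situation for a
shorter element, with the three generators permuted cyclically. -/
theorem GarsideUpTo.gen_mul_ne_of_triangle {i j k : ι} {x y : ArtinMonoid Γ}
    (H : GarsideUpTo Γ L) (hij : Γ.Adj i j) (hjk : Γ.Adj j k) (hik : Γ.Adj i k)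
    (hL : length x < L) : gen i * x ≠ gen j * (gen k * y) := by
  intro h
  obtain ⟨t, -, ht⟩ := (H hL h).exists_of_adj hij
  have hlen := congrArg length h
  simp only [length_gen_mul] at hlen
  have : length y < length x := by omega
  exact GarsideUpTo.gen_mul_ne_of_triangle H hik.symm hij hjk.symm (by omega) ht
termination_by length x

theorem GarsideUpTo.factorsThroughLcm_of_compl_adj_of_adj (H : GarsideUpTo Γ L)
    (hL : length z < L) (hik : Γᶜ.Adj i k) (hkj : Γ.Adj k j)
    (h : gen i * z = gen j * (gen k * z')) :
    FactorsThroughLcm i (gen k * z) j (gen k * (gen j * z')) := by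
  have hlen := congrArg length h
  simp only [length_gen_mul] at hlen
  rcases eq_or_adj_or_compl_adj Γ i j with rfl | hij | hij
  · exact absurd hkj.symm hik.2
  · obtain ⟨t, rfl, ht⟩ := (H hL h).exists_of_adj hij
    simp only [length_gen_mul] at hL hlen
    obtain ⟨u, rfl, hu⟩ := (H (by omega) ht).exists_of_compl_adj hik.symm
    have hlen' := congrArg length hu
    simp only [length_gen_mul] at hlen hlen'
    obtain ⟨v, rfl, rfl⟩ := (H (by omega) hu).exists_of_adj hkj.symm
    convert FactorsThroughLcm.of_adj hij (gen k * (gen j * (gen i * v))) using 1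
    · rw [gen_mul_gen_mul_of_compl_adj hik, gen_mul_gen_mul_gen_mul_of_adj hkj,
        gen_mul_gen_mul_gen_mul_of_adj hij.symm, gen_mul_gen_mul_of_compl_adj hik.symm]
    · rw [gen_mul_gen_mul_gen_mul_of_adj hij.symm, gen_mul_gen_mul_of_compl_adj hik.symm,
        gen_mul_gen_mul_of_compl_adj hik v, gen_mul_gen_mul_gen_mul_of_adj hkj]
  · obtain ⟨t, rfl, ht⟩ := (H hL h).exists_of_compl_adj hij
    simp only [length_gen_mul] at hL hlen
    obtain ⟨u, rfl, rfl⟩ := (H (by omega) ht).exists_of_compl_adj hik.symm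
    convert FactorsThroughLcm.of_compl_adj hij (gen k * (gen j * u)) using 1
    · rw [gen_mul_gen_mul_gen_mul_of_adj hkj]
    · rw [gen_mul_gen_mul_of_compl_adj hij.symm, gen_mul_gen_mul_of_compl_adj hik.symm]

theorem GarsideUpTo.factorsThroughLcm_of_adj_of_adj (H : GarsideUpTo Γ L)
    (hL : length (gen k * z) < L) (hik : Γ.Adj i k) (hkj : Γ.Adj k j)
    (h : gen i * (gen k * z) = gen j * (gen k * z')) :
    FactorsThroughLcm i (gen k * (gen i * z)) j (gen k * (gen j * z')) := by
  have hlen := congrArg length h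
  have hL' := hL
  simp only [length_gen_mul] at hL' hlen
  rcases eq_or_adj_or_compl_adj Γ i j with rfl | hij | hij
  · have hz : gen k * z = gen k * z' := (H hL h).eq
    rw [(H (by omega) hz).eq]
    exact .refl _ _
  · obtain ⟨t, ht, -⟩ := (H hL h).exists_of_adj hij
    exact absurd ht (H.gen_mul_ne_of_triangle hkj hij.symm hik.symm (by omega))
  · obtain ⟨t, ht, ht'⟩ := (H hL h).exists_of_compl_adj hij
    obtain ⟨u, rfl, rfl⟩ := (H (by omega) ht).exists_of_adj hkj
    obtain ⟨v, rfl, hv⟩ := (H (by omega) ht').exists_of_adj hik.symm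
    simp only [length_gen_mul] at hL' hlen
    have huv : gen j * u = gen i * v := (H (by rw [length_gen_mul]; omega) hv).eq
    obtain ⟨r, rfl, rfl⟩ := (H (by omega) huv).exists_of_compl_adj hij.symm
    convert FactorsThroughLcm.of_compl_adj hij (gen k * (gen j * (gen i * (gen k * r)))) using 1
    · rw [gen_mul_gen_mul_of_compl_adj hij, gen_mul_gen_mul_gen_mul_of_adj hik,
        gen_mul_gen_mul_gen_mul_of_adj hkj]
    · rw [gen_mul_gen_mul_of_compl_adj hij.symm, gen_mul_gen_mul_gen_mul_of_adj hkj.symm,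
        gen_mul_gen_mul_gen_mul_of_adj hik.symm, gen_mul_gen_mul_of_compl_adj hij]

theorem GarsideUpTo.factorsThroughLcm_of_compl_adj_of_compl_adj (H : GarsideUpTo Γ L)
    (hL : length z < L) (hik : Γᶜ.Adj i k) (hkj : Γᶜ.Adj k j)
    (h : gen i * z = gen j * z') :
    FactorsThroughLcm i (gen k * z) j (gen k * z') := by
  rcases eq_or_adj_or_compl_adj Γ i j with rfl | hij | hij
  · rw [(H hL h).eq]
    exact .refl _ _
  · obtain ⟨t, rfl, rfl⟩ := (H hL h).exists_of_adj hij
    convert FactorsThroughLcm.of_adj hij (gen k * t) using 1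
    · rw [gen_mul_gen_mul_of_compl_adj hkj, gen_mul_gen_mul_of_compl_adj hik]
    · rw [gen_mul_gen_mul_of_compl_adj hik.symm, gen_mul_gen_mul_of_compl_adj hkj]
  · obtain ⟨t, rfl, rfl⟩ := (H hL h).exists_of_compl_adj hij
    convert FactorsThroughLcm.of_compl_adj hij (gen k * t) using 1
    · rw [gen_mul_gen_mul_of_compl_adj hkj]
    · rw [gen_mul_gen_mul_of_compl_adj hik]

theorem GarsideUpTo.factorsThroughLcm_trans (H : GarsideUpTo Γ L) (hL : length w ≤ L)
    (h₁ : FactorsThroughLcm i x k w) (h₂ : FactorsThroughLcm k w j y) :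
    FactorsThroughLcm i x j y := by
  have hlen {l : ι} {z : ArtinMonoid Γ} (hw : w = gen l * z) : length z < L := by
    rw [hw, length_gen_mul] at hL
    exact hL
  rcases eq_or_adj_or_compl_adj Γ i k with rfl | hik | hik
  · rwa [h₁.eq]
  all_goals rcases eq_or_adj_or_compl_adj Γ k j with rfl | hkj | hkj
  · rwa [← h₂.eq]
  · obtain ⟨z, rfl, rfl⟩ := h₁.exists_of_adj hik
    obtain ⟨z', hw, rfl⟩ := h₂.exists_of_adj hkj
    exact H.factorsThroughLcm_of_adj_of_adj (hlen rfl) hik hkj hw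
  · obtain ⟨z, rfl, rfl⟩ := h₁.exists_of_adj hik
    obtain ⟨z', hw, rfl⟩ := h₂.exists_of_compl_adj hkj
    exact (H.factorsThroughLcm_of_compl_adj_of_adj (hlen hw) hkj.symm hik.symm hw.symm).symm
  · rwa [← h₂.eq]
  · obtain ⟨z, rfl, rfl⟩ := h₁.exists_of_compl_adj hik
    obtain ⟨z', hw, rfl⟩ := h₂.exists_of_adj hkj
    exact H.factorsThroughLcm_of_compl_adj_of_adj (hlen rfl) hik hkj hw
  · obtain ⟨z, rfl, rfl⟩ := h₁.exists_of_compl_adj hik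
    obtain ⟨z', hw, rfl⟩ := h₂.exists_of_compl_adj hkj
    exact H.factorsThroughLcm_of_compl_adj_of_compl_adj (hlen rfl) hik hkj hw

/- The set of pairs `(j, y)` related to `(i, x)` is a function of `(i, x)` that respects the
defining relations, because the relation is symmetric and, on short elements, transitive. -/
theorem GarsideUpTo.succ (H : GarsideUpTo Γ L) : GarsideUpTo Γ (L + 1) := by
  intro i j x y hL h
  let f (i : ι) (x : ArtinMonoid Γ) : ι → ArtinMonoid Γ → Prop :=
    fun j y => length x ≤ L → FactorsThroughLcm i x j y
  have f_congr {i j : ι} {x y : ArtinMonoid Γ} (hxy : FactorsThroughLcm i x j y) :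
      f i x = f j y := by
    have hlen : length x = length y := by simpa using congrArg length hxy.gen_mul_eq
    funext k z
    refine propext ⟨fun hx hy => ?_, fun hy hx => ?_⟩
    · exact H.factorsThroughLcm_trans (hlen ▸ hy) hxy.symm (hx (hlen ▸ hy))
    · exact H.factorsThroughLcm_trans (hlen ▸ hx) hxy (hy (hlen ▸ hx))
  have hf : f i x = f j y :=
    apply_eq_of_gen_mul_eq f (fun h z => f_congr (.of_compl_adj h z))
      (fun h z => f_congr (.of_adj h z)) h
  have hx : f i x j y := hf ▸ fun _ => .refl j y
  exact hx (Nat.lt_succ_iff.1 hL)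

end Garside

theorem factorsThroughLcm_of_gen_mul_eq {x y : ArtinMonoid Γ} (h : gen i * x = gen j * y) :
    FactorsThroughLcm i x j y := by
  have garside (L : ℕ) : GarsideUpTo Γ L := by
    induction L with
    | zero => intro i j x y hL; simp at hL
    | succ L ih => exact ih.succ
  exact garside _ (length x).lt_succ_self h

instance : IsLeftCancelMul (ArtinMonoid Γ) where
  mul_left_cancel a x y h := by
    induction a using Submonoid.induction_of_closure_eq_top_left closure_range_gen with
    | one => simpa using h
    | mul_left _ hi a ha =>
      obtain ⟨i, rfl⟩ := hi
      have h' : gen i * (a * x) = gen i * (a * y) := by simpa only [mul_assoc] using h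
      exact ha (factorsThroughLcm_of_gen_mul_eq h').eq

/-! ### Powers of generators -/

theorem eq_of_gen_dvd_gen_pow {n : ℕ} (h : (gen i : ArtinMonoid Γ) ∣ gen j ^ n) : i = j := by
  induction n with
  | zero =>
    obtain ⟨z, hz⟩ := h
    have hlen := congrArg length hz
    simp only [pow_zero, length_one, length_mul, length_gen] at hlen
    omega
  | succ n ih =>
    obtain ⟨z, hz⟩ := h
    have hlcm : FactorsThroughLcm j (gen j ^ n) i z :=
      factorsThroughLcm_of_gen_mul_eq (by rw [← pow_succ', hz])
    rcases eq_or_adj_or_compl_adj Γ j i with rfl | hji | hji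
    · rfl
    · obtain ⟨t, ht, -⟩ := hlcm.exists_of_adj hji
      exact ih ⟨_, ht⟩
    · obtain ⟨t, ht, -⟩ := hlcm.exists_of_compl_adj hji
      exact ih ⟨_, ht⟩

theorem gen_mul_gen_dvd_of_gen_dvd_pow_mul (hij : Γ.Adj i j) {n : ℕ} (hn : n ≠ 0)
    {a : ArtinMonoid Γ} (h : gen i ∣ gen j ^ n * a) : gen i * gen j ∣ a := by
  induction n, Nat.one_le_iff_ne_zero.2 hn using Nat.le_induction with
  | base =>
    obtain ⟨b, hb⟩ := h
    rw [pow_one] at hb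
    obtain ⟨t, rfl, -⟩ := (factorsThroughLcm_of_gen_mul_eq hb).exists_of_adj hij.symm
    exact ⟨t, (mul_assoc _ _ _).symm⟩
  | succ n hn' ih =>
    obtain ⟨b, hb⟩ := h
    rw [pow_succ', mul_assoc] at hb
    obtain ⟨t, ht, -⟩ := (factorsThroughLcm_of_gen_mul_eq hb).exists_of_adj hij.symm
    exact ih (Nat.one_le_iff_ne_zero.1 hn') ⟨_, ht⟩

theorem exists_mul_eq_and_semiconjBy_gen {n : ℕ} (hn : n ≠ 0) {b : ArtinMonoid Γ}
    (h : SemiconjBy (gen k * b) (gen i ^ n) (gen j ^ n)) :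
    ∃ (u t : ArtinMonoid Γ) (l : ι),
      gen k * b = u * t ∧ length t ≤ length b ∧ SemiconjBy u (gen l) (gen j) := by
  rcases eq_or_adj_or_compl_adj Γ k j with rfl | hkj | hkj
  · exact ⟨gen k, b, k, rfl, le_rfl, rfl⟩
  · have hdvd : gen k ∣ gen j ^ n * (gen k * b) := by
      rw [← h.eq, mul_assoc]
      exact dvd_mul_right _ _
    obtain ⟨t, ht⟩ := gen_mul_gen_dvd_of_gen_dvd_pow_mul hkj hn hdvd
    have hlen := congrArg length ht
    simp only [length_mul, length_gen] at hlen
    exact ⟨gen k * gen j, t, k, ht, by omega, semiconjBy_gen_mul_gen hkj⟩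
  · exact ⟨gen k, b, j, rfl, le_rfl, gen_commute hkj⟩

theorem semiconjBy_gen_of_pow {i j : ι} {n : ℕ} (hn : n ≠ 0) (a : ArtinMonoid Γ)
    (h : SemiconjBy a (gen i ^ n) (gen j ^ n)) : SemiconjBy a (gen i) (gen j) := by
  rcases eq_one_or_exists_gen_mul a with rfl | ⟨k, b, hab⟩
  · have hpow : gen i ^ n = (gen j ^ n : ArtinMonoid Γ) := by simpa [SemiconjBy] using h
    have hdvd : (gen i : ArtinMonoid Γ) ∣ gen j ^ n := hpow ▸ dvd_pow_self _ hn
    rw [eq_of_gen_dvd_gen_pow hdvd]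
    exact .one_left _
  · obtain ⟨u, t, l, hut, htb, hu⟩ := exists_mul_eq_and_semiconjBy_gen hn (hab ▸ h)
    have : length t < length a := by
      rw [hab, length_gen_mul]
      omega
    rw [hab, hut] at h ⊢
    have ht : SemiconjBy t (gen i ^ n) (gen l ^ n) := by
      refine mul_left_cancel (a := u) ?_
      rw [← mul_assoc, ← mul_assoc, h.eq, (hu.pow_right n).eq, mul_assoc]
    exact hu.mul_left (semiconjBy_gen_of_pow hn t ht)
termination_by length a

end ArtinMonoid

end ArtinMonoid

/-! ### The full twist -/

section BraidSequence

variable {M : Type*} [Monoid M]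

/-- The first `m` terms of the sequence `s` satisfy the braid relations. -/
structure IsBraidSequence (s : ℕ → M) (m : ℕ) : Prop where
  commute {i j : ℕ} (hij : i + 1 < j) (hj : j < m) : Commute (s i) (s j)
  braid {i : ℕ} (hi : i + 1 < m) : s i * s (i + 1) * s i = s (i + 1) * s i * s (i + 1)

/-- The product `s 0 * s 1 * ⋯ * s (m - 1)`. For the generators of the braid group on `m + 1`
strands its power of exponent `m + 1` is the full twist. -/
def coxeterElement (s : ℕ → M) (m : ℕ) : M := ((List.range m).map s).prod

theorem coxeterElement_succ (s : ℕ → M) (m : ℕ) :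
    coxeterElement s (m + 1) = coxeterElement s m * s m :=
  List.prod_range_succ s m

theorem coxeterElement_succ' (s : ℕ → M) (m : ℕ) :
    coxeterElement s (m + 1) = s 0 * coxeterElement (fun i => s (i + 1)) m :=
  List.prod_range_succ' s m

namespace IsBraidSequence

variable {s : ℕ → M} {m : ℕ} {i j k : ℕ}

theorem commute_coxeterElement (hs : IsBraidSequence s m) (hkj : k < j) (hj : j < m) :
    Commute (coxeterElement s k) (s j) := by
  induction k with
  | zero => exact Commute.one_left _
  | succ k ih =>
    rw [coxeterElement_succ]
    exact (ih (by omega)).mul_left (hs.commute hkj hj)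

theorem semiconjBy_coxeterElement (hs : IsBraidSequence s m) (hik : i + 2 ≤ k) (hkm : k ≤ m) :
    SemiconjBy (coxeterElement s k) (s i) (s (i + 1)) := by
  induction k, hik using Nat.le_induction with
  | base =>
    have hcomm : Commute (coxeterElement s i) (s (i + 1)) :=
      hs.commute_coxeterElement (by omega) (by omega)
    have hbraid : SemiconjBy (s i * s (i + 1)) (s i) (s (i + 1)) := by
      rw [SemiconjBy, hs.braid (by omega), mul_assoc]
    rw [coxeterElement_succ, coxeterElement_succ, mul_assoc]
    exact SemiconjBy.mul_left hcomm hbraid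
  | succ k hik ih =>
    rw [coxeterElement_succ]
    exact (ih (by omega)).mul_left (hs.commute (by omega) (by omega)).symm

theorem semiconjBy_coxeterElement_shift (hs : IsBraidSequence s m) (hk : k < m) :
    SemiconjBy (coxeterElement s m) (coxeterElement s k)
      (coxeterElement (fun i => s (i + 1)) k) := by
  induction k with
  | zero => exact SemiconjBy.one_right _
  | succ k ih =>
    rw [coxeterElement_succ, coxeterElement_succ]
    exact (ih (by omega)).mul_right (hs.semiconjBy_coxeterElement (by omega) le_rfl)

theorem semiconjBy_coxeterElement_pow (hs : IsBraidSequence s m) (h : i + k < m) :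
    SemiconjBy (coxeterElement s m ^ k) (s i) (s (i + k)) := by
  induction k with
  | zero => simp
  | succ k ih =>
    rw [pow_succ']
    exact (hs.semiconjBy_coxeterElement (i := i + k) (by omega) le_rfl).mul_left (ih (by omega))

/- Conjugation by the Coxeter element shifts the generators by one; its square brings the last one
back to the first. -/
theorem semiconjBy_coxeterElement_sq (hs : IsBraidSequence s (m + 1)) :
    SemiconjBy (coxeterElement s (m + 1) ^ 2) (s m) (s 0) := by
  set δ := coxeterElement s (m + 1) with hδ
  have hshift : δ * coxeterElement s m = coxeterElement (fun i => s (i + 1)) m * δ :=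
    hs.semiconjBy_coxeterElement_shift m.lt_succ_self
  calc δ ^ 2 * s m
      = s 0 * (coxeterElement (fun i => s (i + 1)) m * δ) * s m := by
        rw [← mul_assoc, ← coxeterElement_succ', ← hδ, sq]
    _ = s 0 * (δ * (coxeterElement s m * s m)) := by rw [← hshift]; simp only [mul_assoc]
    _ = s 0 * δ ^ 2 := by rw [← coxeterElement_succ, ← hδ, sq]

theorem commute_coxeterElement_pow (hs : IsBraidSequence s m) (hi : i < m) :
    Commute (coxeterElement s m ^ (m + 1)) (s i) := by
  obtain ⟨d, rfl⟩ : ∃ d, m = i + d + 1 := ⟨m - i - 1, by omega⟩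
  have up_to_last := hs.semiconjBy_coxeterElement_pow (i := i) (k := d) (by omega)
  have up_from_zero := hs.semiconjBy_coxeterElement_pow (i := 0) (k := i) (by omega)
  have around := up_from_zero.mul_left (hs.semiconjBy_coxeterElement_sq.mul_left up_to_last)
  rw [← pow_add, ← pow_add, zero_add] at around
  rwa [show i + d + 1 + 1 = i + (2 + d) by omega]

theorem dvd_coxeterElement_pow (hs : IsBraidSequence s m) (hi : i < m) :
    s i ∣ coxeterElement s m ^ (m + 1) := by
  obtain ⟨m, rfl⟩ : ∃ n, m = n + 1 := ⟨m - 1, by omega⟩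
  have hshift := hs.semiconjBy_coxeterElement_pow (i := 0) (k := i) (by omega)
  rw [zero_add] at hshift
  have hzero : s 0 ∣ coxeterElement s (m + 1) := ⟨_, coxeterElement_succ' s m⟩
  calc s i ∣ coxeterElement s (m + 1) ^ i * s 0 := ⟨_, hshift.eq⟩
    _ ∣ coxeterElement s (m + 1) ^ (i + 1) := by
      rw [pow_succ]
      exact mul_dvd_mul_left _ hzero
    _ ∣ coxeterElement s (m + 1) ^ (m + 1 + 1) := pow_dvd_pow _ (by omega)

end IsBraidSequence

end BraidSequence

namespace ArtinMonoid

open SimpleGraph (pathGraph pathGraph_adj)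

theorem isBraidSequence_extend_gen (m : ℕ) :
    IsBraidSequence (Function.extend Fin.val (gen (Γ := pathGraph m)) 1) m := by
  have hgen {i : ℕ} (hi : i < m) : Function.extend Fin.val (gen (Γ := pathGraph m)) 1 i =
      gen ⟨i, hi⟩ := Fin.val_injective.extend_apply gen 1 ⟨i, hi⟩
  constructor
  · intro i j hij hj
    rw [hgen hj, hgen (by omega)]
    apply gen_commute
    simp only [SimpleGraph.compl_adj, pathGraph_adj, ne_eq, Fin.mk.injEq]
    omega
  · intro i hi
    rw [hgen hi, hgen (by omega)]
    exact gen_braid (pathGraph_adj.2 (.inl rfl))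

theorem exists_isCentralDenominator_pathGraph (m : ℕ) :
    ∃ z : ArtinMonoid (pathGraph m), IsCentralDenominator z := by
  have hs := isBraidSequence_extend_gen m
  refine ⟨coxeterElement (Function.extend Fin.val gen 1) m ^ (m + 1),
    .of_closure_eq_top closure_range_gen ?_ ?_⟩
  · rintro _ ⟨i, rfl⟩
    rw [← Fin.val_injective.extend_apply gen 1 i]
    exact hs.commute_coxeterElement_pow i.2
  · rintro _ ⟨i, rfl⟩
    rw [← Fin.val_injective.extend_apply gen 1 i]
    exact hs.dvd_coxeterElement_pow i.2

end ArtinMonoid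

/-! ### From positive braids to braids -/

namespace BraidGroup

open ArtinMonoid SimpleGraph

variable {n : ℕ}

theorem σ_commute {i j : Fin (n - 1)} (h : (i : ℕ) + 1 < j) :
    Commute (σ i : BraidGroup n) (σ j) := by
  have hrel : PresentedGroup.mk (braidRels (n - 1)) _ = 1 :=
    PresentedGroup.one_of_mem (.inl ⟨i, j, h, rfl⟩)
  rw [map_mul, map_inv, mul_inv_eq_one, map_mul, map_inv, mul_inv_eq_iff_eq_mul, map_mul] at hrel
  exact hrel

theorem σ_braid {i j : Fin (n - 1)} (h : (i : ℕ) + 1 = j) :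
    σ i * σ j * σ i = (σ j * σ i * σ j : BraidGroup n) := by
  have hrel : PresentedGroup.mk (braidRels (n - 1)) _ = 1 :=
    PresentedGroup.one_of_mem (.inr ⟨i, j, h, rfl⟩)
  rw [map_mul, map_inv, mul_inv_eq_one] at hrel
  simp only [map_mul] at hrel
  exact hrel

/-- The canonical homomorphism from the monoid of positive braids to the braid group. -/
def ofArtinMonoid (n : ℕ) : ArtinMonoid (pathGraph (n - 1)) →* BraidGroup n :=
  PresentedMonoid.lift σ <| by
    rintro _ _ (@⟨i, j, h⟩ | @⟨i, j, h⟩)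
    · rw [compl_adj, pathGraph_adj] at h
      have hfar : (i : ℕ) + 1 < j ∨ (j : ℕ) + 1 < i := by omega
      rcases hfar with h | h
      · simpa using (σ_commute h).eq
      · simpa using (σ_commute h).eq.symm
    · rcases pathGraph_adj.1 h with h | h
      · simpa using σ_braid h
      · simpa using (σ_braid h).symm

@[simp]
theorem ofArtinMonoid_gen (i : Fin (n - 1)) : ofArtinMonoid n (gen i) = σ i := rfl

theorem closure_range_ofArtinMonoid :
    Subgroup.closure (Set.range (ofArtinMonoid n)) = ⊤ := by
  rw [eq_top_iff, ← PresentedGroup.closure_range_of (braidRels (n - 1)), Subgroup.closure_le]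
  rintro _ ⟨i, rfl⟩
  exact Subgroup.subset_closure ⟨gen i, rfl⟩

theorem exists_comp_ofArtinMonoid_eq {H : Type*} [Group H]
    (f : ArtinMonoid (pathGraph (n - 1)) →* H) :
    ∃ ψ : BraidGroup n →* H, ψ.comp (ofArtinMonoid n) = f := by
  refine ⟨PresentedGroup.toGroup (f := fun i => f (gen i)) ?_, ?_⟩
  · rintro _ (⟨i, j, h, rfl⟩ | ⟨i, j, h, rfl⟩)
    · have hcomm : (pathGraph (n - 1))ᶜ.Adj i j := by
        rw [compl_adj, pathGraph_adj]
        omega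
      simp only [map_mul, map_inv, FreeGroup.lift_apply_of]
      rw [mul_inv_eq_one, mul_inv_eq_iff_eq_mul]
      exact ((gen_commute hcomm).map f).eq
    · simp only [map_mul, map_inv, FreeGroup.lift_apply_of, mul_inv_eq_one]
      simpa only [map_mul] using congrArg f (gen_braid (pathGraph_adj.2 (.inl h)))
  · ext i
    exact FreeGroup.lift_apply_of

theorem ofArtinMonoid_injective : Function.Injective (ofArtinMonoid n) := by
  obtain ⟨z, hz⟩ := exists_isCentralDenominator_pathGraph (n - 1)
  obtain ⟨H, _, f, hf⟩ := hz.exists_injective_hom_group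
  obtain ⟨ψ, rfl⟩ := exists_comp_ofArtinMonoid_eq f
  exact Function.Injective.of_comp hf

theorem semiconjBy_σ_of_pow {i j : Fin (n - 1)} {c : ℕ} (hc : c ≠ 0) {g : BraidGroup n}
    (h : SemiconjBy g (σ i ^ c) (σ j ^ c)) : SemiconjBy g (σ i) (σ j) := by
  obtain ⟨z, hz⟩ := exists_isCentralDenominator_pathGraph (n - 1)
  simpa using hz.semiconjBy_of_semiconjBy_map closure_range_ofArtinMonoid ofArtinMonoid_injective
    (semiconjBy_gen_of_pow hc) (by simpa using h)

theorem semiconjBy_σ_zpow_iff {i j : Fin (n - 1)} {c : ℤ} (hc : c ≠ 0) {g : BraidGroup n} :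
    SemiconjBy g (σ i ^ c) (σ j ^ c) ↔ SemiconjBy g (σ i) (σ j) := by
  refine ⟨fun h => semiconjBy_σ_of_pow (Int.natAbs_ne_zero.2 hc) ?_, fun h => h.zpow_right c⟩
  rcases Int.natAbs_eq c with hc' | hc' <;> rw [hc'] at h
  · simpa only [zpow_natCast] using h
  · simpa only [zpow_neg, zpow_natCast, SemiconjBy.inv_right_iff] using h

end BraidGroup

/-- For any Artin generator `σ_k` of `B_n` and any nonzero integer `c`, the
centralizer of `σ_k` equals the centralizer of `σ_k ^ c`. -/
theorem centralizer_gen_eq_centralizer_zpow (n : ℕ) (hn : 2 ≤ n)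
    (k : Fin (n - 1)) (c : ℤ) (hc : c ≠ 0) :
    Subgroup.centralizer {σ (n := n) k} =
      Subgroup.centralizer {(σ (n := n) k) ^ c} := by
  ext g
  simp only [Subgroup.mem_centralizer_singleton_iff]
  exact (BraidGroup.semiconjBy_σ_zpow_iff hc).symm
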